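/- For every φ∈X_{fJ} there is an open neighbourhood N_φ ⊂ U^J∩X_f of φ in X_f such that R^J defines a diffeomorphism from N_φ onto the set R^J(N_φ), which is an open neighbourhood of R^J(φ) in X_0. -/

import Mathlib

set_option linter.unusedSectionVars false

open Set

noncomputable section

/-- The compact interval `[-r,0]`. -/
abbrev Icc0 (r : ℝ) : Set ℝ := Set.Icc (-r) 0

/-- Extension of a continuous map on `[-r,0]` to `ℝ`, by the value `0` outside. -/
def extFun {r : ℝ} {E : Type*} [TopologicalSpace E] [Zero E] (φ : C(Icc0 r, E)) : ℝ → E :=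
  fun t => if h : t ∈ Icc0 r then φ ⟨t, h⟩ else 0

section extlemmas

variable {r : ℝ} {E : Type*} [NormedAddCommGroup E] [NormedSpace ℝ E]

lemma extFun_add (φ ψ : C(Icc0 r, E)) : extFun (φ + ψ) = extFun φ + extFun ψ := by
  funext t; by_cases h : t ∈ Icc0 r <;> simp [extFun, h]

lemma extFun_zero : extFun (0 : C(Icc0 r, E)) = 0 := by
  funext t; by_cases h : t ∈ Icc0 r <;> simp [extFun, h]

lemma extFun_smul (c : ℝ) (φ : C(Icc0 r, E)) : extFun (c • φ) = c • extFun φ := by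
  funext t; by_cases h : t ∈ Icc0 r <;> simp [extFun, h]

end extlemmas

/-- The space `C¹([-r,0],E)`, realized as the closed subspace of pairs `(φ, φ')` in
`C([-r,0],E) × C([-r,0],E)` such that `φ` is differentiable on `[-r,0]` with derivative `φ'`. -/
def C1sub (r : ℝ) (E : Type*) [NormedAddCommGroup E] [NormedSpace ℝ E] :
    Submodule ℝ (C(Icc0 r, E) × C(Icc0 r, E)) where
  carrier := {p | ∀ t ∈ Icc0 r, HasDerivWithinAt (extFun p.1) (extFun p.2 t) (Icc0 r) t}
  add_mem' := by
    intro p q hp hq t ht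
    have h := (hp t ht).add (hq t ht)
    have e1 : extFun (p + q).1 = fun s => extFun p.1 s + extFun q.1 s := by
      simp [Prod.fst_add, extFun_add]; rfl
    have e2 : extFun (p + q).2 t = extFun p.2 t + extFun q.2 t := by
      simp [Prod.snd_add, extFun_add]
    rw [e1, e2]; exact h
  zero_mem' := by
    intro t ht
    have e1 : extFun (0 : C(Icc0 r, E) × C(Icc0 r, E)).1 = fun _ : ℝ => (0 : E) := by
      simp [extFun_zero]; rfl
    have e2 : extFun (0 : C(Icc0 r, E) × C(Icc0 r, E)).2 t = 0 := by
      simp [extFun_zero]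
    rw [e1, e2]; exact hasDerivWithinAt_const _ _ _
  smul_mem' := by
    intro c p hp t ht
    have h := (hp t ht).const_smul c
    have e1 : extFun (c • p).1 = fun s => c • extFun p.1 s := by
      simp [Prod.smul_fst, extFun_smul]; rfl
    have e2 : extFun (c • p).2 t = c • extFun p.2 t := by
      simp [Prod.smul_snd, extFun_smul]
    rw [e1, e2]; exact h

/-- The Banach space `C¹([-r,0],E)`. -/
abbrev C1 (r : ℝ) (E : Type*) [NormedAddCommGroup E] [NormedSpace ℝ E] := ↥(C1sub r E)

section C1ops

variable {r : ℝ} {E : Type*} [NormedAddCommGroup E] [NormedSpace ℝ E]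

/-- Evaluation `φ(t)` of `φ ∈ C¹([-r,0],E)` (extended by `0` outside `[-r,0]`). -/
def evC (φ : C1 r E) (t : ℝ) : E := extFun φ.1.1 t

/-- Evaluation `φ'(t)` of the derivative of `φ ∈ C¹([-r,0],E)`. -/
def dvC (φ : C1 r E) (t : ℝ) : E := extFun φ.1.2 t

end C1ops

/-- The continuous linear map `ℝ → (Fin n → ℝ)` sending `x` to the vector `x·e_ν`. -/
def sCLM (n : ℕ) (ν : Fin n) : ℝ →L[ℝ] (Fin n → ℝ) :=
  ContinuousLinearMap.pi (fun j => if j = ν then ContinuousLinearMap.id ℝ ℝ else 0)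

/-- `ψ · e_ν` for a continuous map `ψ`. -/
def CMsingle {r : ℝ} {n : ℕ} (ν : Fin n) (φ : C(Icc0 r, ℝ)) : C(Icc0 r, Fin n → ℝ) :=
  ⟨fun t => sCLM n ν (φ t), (sCLM n ν).continuous.comp φ.continuous⟩

lemma extFun_CMsingle {r : ℝ} {n : ℕ} (ν : Fin n) (φ : C(Icc0 r, ℝ)) (t : ℝ) :
    extFun (CMsingle ν φ) t = sCLM n ν (extFun φ t) := by
  by_cases h : t ∈ Icc0 r <;> simp [extFun, CMsingle, h]

/-- `ψ · e_ν ∈ C¹([-r,0],ℝⁿ)` for a scalar function `ψ ∈ C¹([-r,0],ℝ)`. -/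
def singleC1 {r : ℝ} {n : ℕ} (ν : Fin n) (φ : C1 r ℝ) : C1 r (Fin n → ℝ) :=
  ⟨(CMsingle ν φ.1.1, CMsingle ν φ.1.2), by
    intro t ht
    have h := ((sCLM n ν).hasFDerivAt).comp_hasDerivWithinAt t (φ.2 t ht)
    have e1 : extFun (CMsingle ν φ.1.1) = (sCLM n ν) ∘ (extFun φ.1.1) := by
      funext s; exact extFun_CMsingle ν φ.1.1 s
    rw [show (CMsingle ν φ.1.1, CMsingle ν φ.1.2).1 = CMsingle ν φ.1.1 from rfl,
      show (CMsingle ν φ.1.1, CMsingle ν φ.1.2).2 = CMsingle ν φ.1.2 from rfl,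
      e1, extFun_CMsingle]
    exact h⟩

/-- The linear map `ℝⁿ → C¹([-r,0],ℝⁿ)`, `x ↦ Σ_ν x_ν ψ_ν · e_ν` (the map `Y·x`). -/
def Ymap {r : ℝ} {n : ℕ} (ψ : Fin n → C1 r ℝ) : (Fin n → ℝ) →ₗ[ℝ] C1 r (Fin n → ℝ) where
  toFun x := ∑ ν, x ν • singleC1 ν (ψ ν)
  map_add' x y := by simp [add_smul, Finset.sum_add_distrib]
  map_smul' c x := by simp [smul_smul, Finset.smul_sum]

/-- The closed subspace `X₀ = {φ ∈ C¹ : φ'(0) = 0}`. -/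
def X0sub (r : ℝ) (n : ℕ) : Submodule ℝ (C1 r (Fin n → ℝ)) where
  carrier := {φ | dvC φ 0 = 0}
  add_mem' := by
    intro φ ψ hφ hψ
    have : dvC (φ + ψ) 0 = dvC φ 0 + dvC ψ 0 := by
      simp [dvC, extFun_add]
    rw [Set.mem_setOf_eq] at *
    rw [this, hφ, hψ, add_zero]
  zero_mem' := by
    show dvC (0 : C1 r (Fin n → ℝ)) 0 = 0
    simp [dvC, extFun_zero]
  smul_mem' := by
    intro c φ hφ
    have : dvC (c • φ) 0 = c • dvC φ 0 := by simp [dvC, extFun_smul]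
    rw [Set.mem_setOf_eq] at *
    rw [this, hφ, smul_zero]

/-- The projection-like map `R φ = φ − Y·φ'(0)`. -/
def RKmap {r : ℝ} {n : ℕ} (ψ : Fin n → C1 r ℝ) (φ : C1 r (Fin n → ℝ)) : C1 r (Fin n → ℝ) :=
  φ - Ymap ψ (dvC φ 0)

section diffeos

variable {E : Type*} [NormedAddCommGroup E] [NormedSpace ℝ E]
variable {E' : Type*} [NormedAddCommGroup E'] [NormedSpace ℝ E']

/-- `f` defines a `C¹`-diffeomorphism from `s` onto `t`: `f` is continuously differentiable
on `s`, injective on `s`, maps `s` onto `t`, and has a continuously differentiable inverse. -/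
def IsC1DiffeoOn (f : E → E') (s : Set E) (t : Set E') : Prop :=
  ContDiffOn ℝ 1 f s ∧ Set.InjOn f s ∧ f '' s = t ∧
    ∃ g : E' → E, ContDiffOn ℝ 1 g t ∧ Set.InvOn g f s t

/-- The tangent cone of `X ⊆ E` at `x`: all velocities `c'(0)` of continuously differentiable
curves in `X` through `x`. -/
def tangentSet (X : Set E) (x : E) : Set E :=
  {v | ∃ (c : ℝ → E) (ε : ℝ), 0 < ε ∧ ContDiffOn ℝ 1 c (Set.Ioo (-ε) ε) ∧
      (∀ s ∈ Set.Ioo (-ε) ε, c s ∈ X) ∧ c 0 = x ∧ HasDerivWithinAt c v (Set.Ioo (-ε) ε) 0}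

/-- `X` is a continuously differentiable submanifold of codimension `m` of `E`. -/
def IsC1SubmanifoldCodim (X : Set E) (m : ℕ) : Prop :=
  ∀ x ∈ X, ∃ (O : Set E) (Φ : E → E) (H Q : Submodule ℝ E),
    IsOpen O ∧ x ∈ O ∧ IsClosed (H : Set E) ∧ IsCompl H Q ∧ Module.finrank ℝ Q = m ∧
    IsOpen (Φ '' O) ∧ IsC1DiffeoOn Φ O (Φ '' O) ∧ Φ '' (X ∩ O) = (H : Set E) ∩ (Φ '' O)

/-- `X` is a continuously differentiable submanifold of `E`. -/
def IsC1Submanifold (X : Set E) : Prop :=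
  ∀ x ∈ X, ∃ (O : Set E) (Φ : E → E) (H : Submodule ℝ E),
    IsOpen O ∧ x ∈ O ∧ IsClosed (H : Set E) ∧
    IsOpen (Φ '' O) ∧ IsC1DiffeoOn Φ O (Φ '' O) ∧ Φ '' (X ∩ O) = (H : Set E) ∩ (Φ '' O)

/-- `A` is an almost graph over `H`. -/
def IsAlmostGraphOver (A : Set E) (H : Set E) : Prop :=
  ∃ (dm : Set E) (α : E → E), dm ⊆ H ∧ ContDiffOn ℝ 1 α dm ∧
    (∀ ζ ∈ dm ∩ A, α ζ = 0) ∧ (∀ ζ ∈ dm \ A, α ζ ∉ H) ∧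
    IsC1DiffeoOn (fun ζ => ζ + α ζ) dm A

end diffeos

/-- The data of the delay differential system
`x'(t) = g(x(t-d_1(Lx_t)),…,x(t-d_kk(Lx_t)))`. -/
structure Setting (r : ℝ) (n kk : ℕ) (F : Type*) [NormedAddCommGroup F] [NormedSpace ℝ F] where
  /-- The continuous linear map `L : C([-r,0],ℝⁿ) → F`. -/
  L : C(Icc0 r, Fin n → ℝ) →L[ℝ] F
  /-- The open set `W ⊆ F`. -/
  W : Set F
  Wopen : IsOpen W
  /-- The delay functions `d_k : W → [0,r]`. -/
  d : Fin kk → F → ℝ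
  d_smooth : ∀ k, ContDiffOn ℝ 1 (d k) W
  d_mem : ∀ k, ∀ w ∈ W, d k w ∈ Set.Icc (0:ℝ) r
  /-- The open set `V ⊆ (ℝⁿ)^kk`. -/
  V : Set (Fin kk → Fin n → ℝ)
  Vopen : IsOpen V
  /-- The right hand side function `g : V → ℝⁿ`. -/
  g : (Fin kk → Fin n → ℝ) → Fin n → ℝ
  g_smooth : ContDiffOn ℝ 1 g V

namespace Setting

variable {r : ℝ} {n kk : ℕ} {F : Type*} [NormedAddCommGroup F] [NormedSpace ℝ F]
variable (S : Setting r n kk F)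

/-- `L` applied to (the `C⁰`-part of) `φ ∈ C¹`. -/
def Lof (φ : C1 r (Fin n → ℝ)) : F := S.L φ.1.1

/-- `φ̂ = (φ(-d_1(Lφ)),…,φ(-d_kk(Lφ)))`. -/
def hat (φ : C1 r (Fin n → ℝ)) : Fin kk → Fin n → ℝ := fun k => evC φ (-(S.d k (S.Lof φ)))

/-- The domain `U = {φ ∈ C¹ : Lφ ∈ W, φ̂ ∈ V}`. -/
def U : Set (C1 r (Fin n → ℝ)) := {φ | S.Lof φ ∈ S.W ∧ S.hat φ ∈ S.V}

/-- The right hand side `f(φ) = g(φ̂)`. -/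
def fmap (φ : C1 r (Fin n → ℝ)) : Fin n → ℝ := S.g (S.hat φ)

/-- The solution manifold `X_f = {φ ∈ U : φ'(0) = f(φ)}`. -/
def Xf : Set (C1 r (Fin n → ℝ)) := {φ | φ ∈ S.U ∧ dvC φ 0 = S.fmap φ}

/-- `W_J = {w ∈ W : d_j(w)=0 for j∈J, d_k(w)>0 for k∉J}`. -/
def WJ (J : Finset (Fin kk)) : Set F :=
  {w | w ∈ S.W ∧ (∀ j ∈ J, S.d j w = 0) ∧ ∀ k ∉ J, 0 < S.d k w}

/-- `W^J = {w ∈ W : d_k(w)>0 for k∉J}`. -/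
def WupJ (J : Finset (Fin kk)) : Set F :=
  {w | w ∈ S.W ∧ ∀ k ∉ J, 0 < S.d k w}

/-- `U_J = U ∩ L⁻¹(W_J)`. -/
def UJ (J : Finset (Fin kk)) : Set (C1 r (Fin n → ℝ)) := {φ | φ ∈ S.U ∧ S.Lof φ ∈ S.WJ J}

/-- `U^J = U ∩ L⁻¹(W^J)`. -/
def UupJ (J : Finset (Fin kk)) : Set (C1 r (Fin n → ℝ)) := {φ | φ ∈ S.U ∧ S.Lof φ ∈ S.WupJ J}

/-- `X_{fJ} = X_f ∩ U_J`. -/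
def XfJ (J : Finset (Fin kk)) : Set (C1 r (Fin n → ℝ)) := S.Xf ∩ S.UJ J

/-- Hypothesis (b): `g` is bounded. -/
def HypB : Prop := ∃ M, ∀ v ∈ S.V, ‖S.g v‖ ≤ M

/-- Hypothesis (d1b): `d₁ = 0` on `W` and `g` is bounded on subsets of `V` with bounded
first component. -/
def HypD1B (hk : 0 < kk) : Prop :=
  (∀ w ∈ S.W, S.d ⟨0, hk⟩ w = 0) ∧
  ∀ B : Set (Fin n → ℝ), Bornology.IsBounded B →
    Bornology.IsBounded (S.g '' {v | v ∈ S.V ∧ v ⟨0, hk⟩ ∈ B})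

/-- The partial derivative `∂_{(k-1)n+ν} g_μ (φ̂)`. -/
def dgCoeff (φ : C1 r (Fin n → ℝ)) (k : Fin kk) (ν : Fin n) (μ : Fin n) : ℝ :=
  fderivWithin ℝ S.g S.V (S.hat φ) (Pi.single k (Pi.single ν 1)) μ

/-- The right hand side of the formula for `Df_μ(φ)χ`. -/
def dFormula (φ χ : C1 r (Fin n → ℝ)) (μ : Fin n) : ℝ :=
  ∑ k, ∑ ν, S.dgCoeff φ k ν μ *
    (evC χ (-(S.d k (S.Lof φ))) ν -
      dvC φ (-(S.d k (S.Lof φ))) ν * fderivWithin ℝ (S.d k) S.W (S.Lof φ) (S.Lof χ))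

/-- The map `R^J(φ) = φ − Y_J(Lφ)·φ'(0)` of Section 4 of the paper. -/
def RJmap (y : Fin n → F → C1 r ℝ) (φ : C1 r (Fin n → ℝ)) : C1 r (Fin n → ℝ) :=
  φ - Ymap (fun ν => y ν (S.Lof φ)) (dvC φ 0)

end Setting
section helpers
open Set Filter Topology MeasureTheory

section aux1

variable {r : ℝ} {E : Type*} [NormedAddCommGroup E] [NormedSpace ℝ E]

lemma neg_le_of_pos' (hr : 0 < r) : -r ≤ (0:ℝ) := by linarith

/-- clamped evaluation -/
def clampC (hr : 0 < r) (p : C(Icc0 r, E)) (s : ℝ) : E :=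
  p (projIcc (-r) 0 (neg_le_of_pos' hr) s)

lemma clampC_cont (hr : 0 < r) (p : C(Icc0 r, E)) : Continuous (clampC hr p) :=
  p.continuous.comp continuous_projIcc

lemma clampC_eq (hr : 0 < r) (p : C(Icc0 r, E)) {t : ℝ} (ht : t ∈ Icc0 r) :
    clampC hr p t = extFun p t := by
  simp only [clampC, extFun, dif_pos ht]
  rw [projIcc_of_mem]

lemma clampC_norm (hr : 0 < r) (p : C(Icc0 r, E)) (t : ℝ) : ‖clampC hr p t‖ ≤ ‖p‖ :=
  p.norm_coe_le_norm _

/-- affine extension by integration -/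
def evG (hr : 0 < r) (p : C(Icc0 r, E) × C(Icc0 r, E)) (t : ℝ) : E :=
  clampC hr p.1 0 + ∫ s in (0:ℝ)..t, clampC hr p.2 s

lemma clampC_ii (hr : 0 < r) (p : C(Icc0 r, E)) (a b : ℝ) :
    IntervalIntegrable (clampC hr p) volume a b := (clampC_cont hr p).intervalIntegrable _ _

variable [CompleteSpace E]

lemma evG_hasDerivAt (hr : 0 < r) (p : C(Icc0 r, E) × C(Icc0 r, E)) (t : ℝ) :
    HasDerivAt (evG hr p) (clampC hr p.2 t) t :=
  ((clampC_cont hr p.2).integral_hasStrictDerivAt 0 t).hasDerivAt.const_add _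

/-- continuous linear version -/
def evL (hr : 0 < r) (t : ℝ) : (C(Icc0 r, E) × C(Icc0 r, E)) →L[ℝ] E :=
  LinearMap.mkContinuous
    { toFun := fun p => evG hr p t
      map_add' := by
        intro p q
        simp only [evG]
        have : ∀ s, clampC hr (p + q).2 s = clampC hr p.2 s + clampC hr q.2 s := fun s => rfl
        simp only [this]
        rw [intervalIntegral.integral_add (clampC_ii _ _ _ _) (clampC_ii _ _ _ _)]
        simp only [clampC, Prod.fst_add, ContinuousMap.add_apply]
        abel
      map_smul' := by
        intro c p
        simp only [evG]
        have : ∀ s, clampC hr (c • p).2 s = c • clampC hr p.2 s := fun s => rfl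
        simp only [this]
        rw [intervalIntegral.integral_smul]
        simp only [clampC, Prod.smul_fst, ContinuousMap.smul_apply, RingHom.id_apply, smul_add] }
    (1 + |t|) (by
      intro p
      have h2 : ‖∫ s in (0:ℝ)..t, clampC hr p.2 s‖ ≤ ‖p.2‖ * |t - 0| :=
        intervalIntegral.norm_integral_le_of_norm_le_const (fun s _ => clampC_norm hr p.2 s)
      have h1 := clampC_norm hr p.1 0
      have h3 := norm_fst_le p
      have h4 := norm_snd_le p
      have h5 : ‖p.2‖ * |t - 0| ≤ ‖p‖ * |t| := by
        rw [sub_zero]; gcongr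
      calc ‖evG hr p t‖ ≤ _ := norm_add_le _ _
        _ ≤ _ := by linarith)

lemma evL_apply (hr : 0 < r) (t : ℝ) (p : C(Icc0 r, E) × C(Icc0 r, E)) :
    evL hr t p = evG hr p t := rfl

lemma evL_lip (hr : 0 < r) (t s : ℝ) :
    ‖evL (E := E) hr t - evL hr s‖ ≤ |t - s| := by
  refine ContinuousLinearMap.opNorm_le_bound _ (abs_nonneg _) (fun p => ?_)
  simp only [sub_apply, evL_apply, evG]
  rw [add_sub_add_left_eq_sub, intervalIntegral.integral_interval_sub_left (clampC_ii _ _ _ _) (clampC_ii _ _ _ _)]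
  have h2 : ‖∫ x in s..t, clampC hr p.2 x‖ ≤ ‖p.2‖ * |t - s| :=
    intervalIntegral.norm_integral_le_of_norm_le_const (fun s _ => clampC_norm hr p.2 s)
  calc _ ≤ _ := h2
    _ ≤ _ := by rw [mul_comm]; gcongr; exact norm_snd_le p

lemma evL_cont (hr : 0 < r) : Continuous (evL (E := E) hr) := by
  have : LipschitzWith 1 (evL (E := E) hr) := by
    refine LipschitzWith.of_dist_le_mul (fun t s => ?_)
    rw [dist_eq_norm, Real.dist_eq]
    simpa using evL_lip hr t s
  exact this.continuous

lemma evG_contDiff (hr : 0 < r) :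
    ContDiff ℝ 1 (fun q : (C(Icc0 r, E) × C(Icc0 r, E)) × ℝ => evG hr q.1 q.2) := by
  rw [contDiff_one_iff_hasFDerivAt]
  have c1 : Continuous (fun q : (C(Icc0 r, E) × C(Icc0 r, E)) × ℝ => evL (E := E) hr q.2) :=
    (evL_cont hr).comp continuous_snd
  have c2 : Continuous (fun q : (C(Icc0 r, E) × C(Icc0 r, E)) × ℝ =>
      ContinuousLinearMap.toSpanSingleton ℝ (clampC hr q.1.2 q.2)) := by
    have : Continuous (fun q : (C(Icc0 r, E) × C(Icc0 r, E)) × ℝ => clampC hr q.1.2 q.2) := by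
      have : Continuous (fun q : (C(Icc0 r, E) × C(Icc0 r, E)) × ℝ =>
        projIcc (-r) 0 (neg_le_of_pos' hr) q.2) := continuous_projIcc.comp continuous_snd
      unfold clampC
      fun_prop
    exact (ContinuousLinearMap.toSpanSingletonCLE (𝕜 := ℝ) (E := E)).continuous.comp this
  refine ⟨fun q => (evL hr q.2).coprod (ContinuousLinearMap.toSpanSingleton ℝ (clampC hr q.1.2 q.2)),
    ?_, ?_⟩
  · have : ∀ q : (C(Icc0 r, E) × C(Icc0 r, E)) × ℝ, (evL hr q.2).coprod
        (ContinuousLinearMap.toSpanSingleton ℝ (clampC hr q.1.2 q.2)) =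
        (evL hr q.2) ∘L (ContinuousLinearMap.fst ℝ _ _) +
        (ContinuousLinearMap.toSpanSingleton ℝ (clampC hr q.1.2 q.2)) ∘L
          (ContinuousLinearMap.snd ℝ _ _) := by
      intro q; ext <;> simp
    simp only [this]
    exact (c1.clm_comp continuous_const).add (c2.clm_comp continuous_const)
  · intro q
    exact (hasStrictFDerivAt_uncurry_coprod (𝕜 := ℝ) (u := q) (f := fun p t => evG hr p t)
      (f₁ := fun _ t => evL hr t)
      (f₂ := fun p t => ContinuousLinearMap.toSpanSingleton ℝ (clampC hr p.2 t))
      (Eventually.of_forall fun v => by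
        have := (evL (E := E) hr v.2).hasFDerivAt (x := v.1)
        exact this)
      (Eventually.of_forall fun v => (evG_hasDerivAt hr v.1 v.2).hasFDerivAt)
      c1.continuousAt c2.continuousAt).hasFDerivAt

lemma mem_C1sub_iff (hr : 0 < r) (p : C(Icc0 r, E) × C(Icc0 r, E)) :
    p ∈ C1sub r E ↔ ∀ t : Icc0 r, p.1 t = evG hr p t := by
  have h0 : (0:ℝ) ∈ Icc0 r := ⟨by linarith, le_rfl⟩
  constructor
  · intro hp t
    have hp' : ∀ t ∈ Icc0 r, HasDerivWithinAt (extFun p.1) (extFun p.2 t) (Icc0 r) t := hp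
    have key : ∀ t ∈ Icc0 r, HasDerivWithinAt (fun s => extFun p.1 s - evG hr p s) 0 (Icc0 r) t := by
      intro t ht
      have := (hp' t ht).sub (evG_hasDerivAt hr p t).hasDerivWithinAt
      rwa [clampC_eq hr p.2 ht, sub_self] at this
    have hc := (convex_Icc (-r) (0:ℝ)).norm_image_sub_le_of_norm_hasDerivWithin_le (C := 0)
      (f := fun s => extFun p.1 s - evG hr p s) (f' := fun _ => 0) key (by simp) h0 t.2
    have e0 : evG hr p 0 = extFun p.1 0 := by
      simp [evG, clampC_eq hr p.1 h0]
    have et : extFun p.1 t = p.1 t := by simp only [extFun, dif_pos t.2]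
    rw [zero_mul, norm_le_zero_iff, e0, sub_self, sub_zero, sub_eq_zero, et] at hc
    exact hc
  · intro h t ht
    have := (evG_hasDerivAt hr p t).hasDerivWithinAt (s := Icc0 r)
    rw [clampC_eq hr p.2 ht] at this
    refine this.congr (fun s hs => ?_) ?_
    · simp only [extFun, dif_pos hs]; exact h ⟨s, hs⟩
    · simp only [extFun, dif_pos ht]; exact h ⟨t, ht⟩

lemma C1_complete (hr : 0 < r) : CompleteSpace (C1 r E) := by
  have : IsClosed (C1sub r E : Set (C(Icc0 r, E) × C(Icc0 r, E))) := by
    have e : (C1sub r E : Set (C(Icc0 r, E) × C(Icc0 r, E))) =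
        ⋂ t : Icc0 r, {p | p.1 t = evL hr t p} := by
      ext p
      simp only [SetLike.mem_coe, mem_C1sub_iff hr, mem_iInter, mem_setOf_eq, evL_apply]
    rw [e]
    refine isClosed_iInter fun t => isClosed_eq ?_ (evL hr t).continuous
    fun_prop
  exact this.completeSpace_coe

/-- smooth evaluation on C1 -/
def evX (hr : 0 < r) (φ : C1 r E) (t : ℝ) : E := evG hr φ.1 t

lemma evX_eq (hr : 0 < r) (φ : C1 r E) {t : ℝ} (ht : t ∈ Icc0 r) : evX hr φ t = evC φ t := by
  have := (mem_C1sub_iff hr φ.1).1 φ.2 ⟨t, ht⟩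
  rw [evX, evC, ← this]
  simp only [extFun, dif_pos ht]

lemma evX_contDiff (hr : 0 < r) :
    ContDiff ℝ 1 (fun q : C1 r E × ℝ => evX hr q.1 q.2) := by
  have h : ContDiff ℝ 1 (fun q : C1 r E × ℝ => (((C1sub r E).subtypeL q.1, q.2) :
    (C(Icc0 r, E) × C(Icc0 r, E)) × ℝ)) := by fun_prop
  exact (evG_contDiff hr).comp h

lemma dv0_contDiff (hr : 0 < r) : ContDiff ℝ 1 (fun φ : C1 r E => dvC φ 0) := by
  have h0 : (0:ℝ) ∈ Icc0 r := ⟨by linarith, le_rfl⟩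
  have : (fun φ : C1 r E => dvC φ 0) = ((ContinuousMap.evalCLM ℝ (⟨0, h0⟩ : Icc0 r)) ∘L
      (ContinuousLinearMap.snd ℝ _ _) ∘L (C1sub r E).subtypeL : C1 r E →L[ℝ] E) := by
    funext φ
    simp only [dvC, extFun, dif_pos h0]; rfl
  rw [this]
  exact ContinuousLinearMap.contDiff _

end aux1

section aux2
variable {r : ℝ} {n : ℕ}

/-- `singleC1` as a continuous linear map -/
def singleL (r : ℝ) {n : ℕ} (ν : Fin n) : C1 r ℝ →L[ℝ] C1 r (Fin n → ℝ) :=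
  ((((sCLM n ν).compLeftContinuous ℝ (Icc0 r)).prodMap
    ((sCLM n ν).compLeftContinuous ℝ (Icc0 r))) ∘L (C1sub r ℝ).subtypeL).codRestrict _
      (fun φ => (singleC1 ν φ).2)

lemma singleL_apply (ν : Fin n) (φ : C1 r ℝ) : singleL r ν φ = singleC1 ν φ := rfl

lemma Ymap_apply (ψ : Fin n → C1 r ℝ) (x : Fin n → ℝ) :
    Ymap ψ x = ∑ ν, x ν • singleC1 ν (ψ ν) := rfl

lemma evC_add {E : Type*} [NormedAddCommGroup E] [NormedSpace ℝ E] (φ ψ : C1 r E) (t : ℝ) :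
    evC (φ + ψ) t = evC φ t + evC ψ t := by
  simp [evC, extFun_add]

lemma evC_smul {E : Type*} [NormedAddCommGroup E] [NormedSpace ℝ E] (c : ℝ) (ψ : C1 r E) (t : ℝ) :
    evC (c • ψ) t = c • evC ψ t := by
  simp [evC, extFun_smul]

lemma dvC_add {E : Type*} [NormedAddCommGroup E] [NormedSpace ℝ E] (φ ψ : C1 r E) (t : ℝ) :
    dvC (φ + ψ) t = dvC φ t + dvC ψ t := by
  simp [dvC, extFun_add]

lemma dvC_smul {E : Type*} [NormedAddCommGroup E] [NormedSpace ℝ E] (c : ℝ) (ψ : C1 r E) (t : ℝ) :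
    dvC (c • ψ) t = c • dvC ψ t := by
  simp [dvC, extFun_smul]

lemma evC_single (ν : Fin n) (φ : C1 r ℝ) (t : ℝ) : evC (singleC1 ν φ) t = sCLM n ν (evC φ t) :=
  extFun_CMsingle ν _ t

lemma dvC_single (ν : Fin n) (φ : C1 r ℝ) (t : ℝ) : dvC (singleC1 ν φ) t = sCLM n ν (dvC φ t) :=
  extFun_CMsingle ν _ t

/-- additive version of evaluation -/
def evA (r : ℝ) (n : ℕ) (t : ℝ) : C1 r (Fin n → ℝ) →ₗ[ℝ] (Fin n → ℝ) where
  toFun φ := evC φ t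
  map_add' φ ψ := evC_add φ ψ t
  map_smul' c φ := evC_smul c φ t

/-- additive version of derivative evaluation -/
def dvA (r : ℝ) (n : ℕ) (t : ℝ) : C1 r (Fin n → ℝ) →ₗ[ℝ] (Fin n → ℝ) where
  toFun φ := dvC φ t
  map_add' φ ψ := dvC_add φ ψ t
  map_smul' c φ := dvC_smul c φ t

lemma evC_Ymap (ψ : Fin n → C1 r ℝ) (x : Fin n → ℝ) (t : ℝ) (h : ∀ ν, evC (ψ ν) t = 0) :
    evC (Ymap ψ x) t = 0 := by
  change evA r n t (Ymap ψ x) = 0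
  rw [Ymap_apply, map_sum]
  refine Finset.sum_eq_zero fun ν _ => ?_
  rw [map_smul]
  change x ν • evC (singleC1 ν (ψ ν)) t = 0
  rw [evC_single, h, map_zero, smul_zero]

lemma dvC_Ymap (ψ : Fin n → C1 r ℝ) (x : Fin n → ℝ) (t : ℝ) (h : ∀ ν, dvC (ψ ν) t = 1) :
    dvC (Ymap ψ x) t = x := by
  change dvA r n t (Ymap ψ x) = x
  rw [Ymap_apply, map_sum]
  have : ∀ ν, dvA r n t (x ν • singleC1 ν (ψ ν)) = Pi.single ν (x ν) := by
    intro ν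
    rw [map_smul]
    change x ν • dvC (singleC1 ν (ψ ν)) t = _
    rw [dvC_single, h]
    funext j
    by_cases hj : j = ν
    · subst hj; simp [sCLM]
    · simp [sCLM, hj]
  simp only [this]
  exact Finset.univ_sum_single x

end aux2
section auxabs

lemma contDiff_C1_L {r : ℝ} {E G : Type*} [NormedAddCommGroup E] [NormedSpace ℝ E]
    [NormedAddCommGroup G] [NormedSpace ℝ G] (L : C(Icc0 r, E) →L[ℝ] G) :
    ContDiff ℝ 1 (fun φ : C1 r E => L φ.1.1) := by
  have h : ContDiff ℝ 1 (fun φ : C1 r E => ((C1sub r E).subtypeL φ).1) := by fun_prop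
  exact L.contDiff.comp h

lemma contDiff_sub_map {A B : Type*} [NormedAddCommGroup A] [NormedSpace ℝ A]
    [NormedAddCommGroup B] [NormedSpace ℝ B] (p : Submodule ℝ A) (q : Submodule ℝ B)
    (T : p →L[ℝ] q) : ContDiff ℝ 1 (fun φ : p => T φ) := T.contDiff

lemma contDiffOn_sub_smul {A X : Type*} [NormedAddCommGroup A] [NormedSpace ℝ A]
    (p : Submodule ℝ A)
    [NormedAddCommGroup X] [NormedSpace ℝ X] {a : X → ℝ} {b : X → p} {s : Set X}
    (ha : ContDiffOn ℝ 1 a s) (hb : ContDiffOn ℝ 1 b s) :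
    ContDiffOn ℝ 1 (fun x => a x • b x) s := ha.smul hb

lemma contDiff_C1_map {r : ℝ} {E G : Type*} [NormedAddCommGroup E] [NormedSpace ℝ E]
    [NormedAddCommGroup G] [NormedSpace ℝ G] (T : C1 r E →L[ℝ] C1 r G) :
    ContDiff ℝ 1 (fun φ : C1 r E => T φ) := contDiff_sub_map _ _ T

lemma contDiffOn_C1_smul {r : ℝ} {E X : Type*} [NormedAddCommGroup E] [NormedSpace ℝ E]
    [NormedAddCommGroup X] [NormedSpace ℝ X] {a : X → ℝ} {b : X → C1 r E} {s : Set X}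
    (ha : ContDiffOn ℝ 1 a s) (hb : ContDiffOn ℝ 1 b s) :
    ContDiffOn ℝ 1 (fun x => a x • b x) s := contDiffOn_sub_smul _ ha hb

lemma implicit_abs {X P : Type*} [NormedAddCommGroup X] [NormedSpace ℝ X] [CompleteSpace X]
    [NormedAddCommGroup P] [NormedSpace ℝ P] [CompleteSpace P] (h : X × P → P) (c0 : X) (x0 v : P)
    (hh : ContDiffAt ℝ 1 h (c0, x0)) (hc : ∀ x, h (c0, x) = x - v) (hh0 : h (c0, x0) = 0) :
    ∃ ψ : X → P, ψ c0 = x0 ∧ (∃ B, IsOpen B ∧ c0 ∈ B ∧ ContDiffOn ℝ 1 ψ B) ∧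
      ∀ᶠ v in 𝓝 (c0, x0), h v = 0 ↔ ψ v.1 = v.2 := by
  have hder : fderiv ℝ h (c0, x0) ∘L .inr ℝ X P = ContinuousLinearMap.id ℝ _ := by
    have h1 : HasFDerivAt h (fderiv ℝ h (c0, x0)) (c0, x0) :=
      (hh.differentiableAt one_ne_zero).hasFDerivAt
    have h2 : HasFDerivAt (fun x => h (c0, x)) (fderiv ℝ h (c0, x0) ∘L .inr ℝ X P) x0 :=
      HasFDerivAt.comp x0 h1 (hasFDerivAt_prodMk_right c0 x0)
    have h3 : HasFDerivAt (fun x => h (c0, x)) (ContinuousLinearMap.id ℝ P) x0 := by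
      simp only [hc]
      exact (hasFDerivAt_id x0).sub_const _
    exact h2.unique h3
  have hinv : (fderiv ℝ h (c0, x0) ∘L .inr ℝ X P).IsInvertible := by
    rw [hder]; exact ⟨ContinuousLinearEquiv.refl ℝ _, rfl⟩
  have hψc := hh.contDiffAt_implicitFunction one_ne_zero hinv
  refine ⟨hh.implicitFunction one_ne_zero hinv, hh.implicitFunction_apply_self one_ne_zero hinv,
    ?_, ?_⟩
  · have := hψc.eventually (by simp)
    obtain ⟨B, hB, hBo, hB0⟩ := eventually_nhds_iff.1 this
    exact ⟨B, hBo, hB0, fun x hx => (hB x hx).contDiffWithinAt⟩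
  · have := hh.eventually_apply_eq_iff_implicitFunction one_ne_zero hinv
    rwa [hh0] at this

end auxabs

section aux3
variable {r : ℝ} {n kk : ℕ} {F : Type*} [NormedAddCommGroup F] [NormedSpace ℝ F]
variable (S : Setting r n kk F)

/-- `Lof` as a continuous linear map -/
def LofL : C1 r (Fin n → ℝ) →L[ℝ] F :=
  S.L ∘L (ContinuousLinearMap.fst ℝ _ _) ∘L (C1sub r (Fin n → ℝ)).subtypeL

lemma LofL_apply (φ : C1 r (Fin n → ℝ)) : LofL S φ = S.Lof φ := rfl

lemma Lof_add (φ ψ : C1 r (Fin n → ℝ)) : S.Lof (φ + ψ) = S.Lof φ + S.Lof ψ :=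
  map_add (LofL S) φ ψ

lemma Lof_sub (φ ψ : C1 r (Fin n → ℝ)) : S.Lof (φ - ψ) = S.Lof φ - S.Lof ψ :=
  map_sub (LofL S) φ ψ

lemma Lof_contDiff : ContDiff ℝ 1 S.Lof := by
  exact contDiff_C1_L S.L

lemma WupJ_open (J : Finset (Fin kk)) : IsOpen (S.WupJ J) := by
  rw [isOpen_iff_mem_nhds]
  rintro w ⟨hw, h⟩
  have hW := S.Wopen.mem_nhds hw
  have : ∀ k, ∀ᶠ v in 𝓝 w, k ∉ J → 0 < S.d k v := by
    intro k
    by_cases hk : k ∈ J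
    · exact Eventually.of_forall fun v h => absurd hk h
    · have hc := ((S.d_smooth k).continuousOn.continuousAt hW)
      filter_upwards [hc.eventually (lt_mem_nhds (h k hk))] with v hv _ using hv
  filter_upwards [hW, eventually_all.2 this] with v hv hv2 using ⟨hv, hv2⟩

lemma hat_contDiffOn (hr : 0 < r) : ContDiffOn ℝ 1 S.hat (S.Lof ⁻¹' S.W) := by
  rw [contDiffOn_pi]
  intro k
  have hd : ContDiffOn ℝ 1 (fun φ => S.d k (S.Lof φ)) (S.Lof ⁻¹' S.W) :=
    (S.d_smooth k).comp (Lof_contDiff S).contDiffOn (fun φ h => h)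
  have h2 : ContDiffOn ℝ 1 (fun φ : C1 r (Fin n → ℝ) => (φ, -(S.d k (S.Lof φ))))
    (S.Lof ⁻¹' S.W) := contDiffOn_id.prodMk hd.neg
  refine ((evX_contDiff (E := Fin n → ℝ) hr).comp_contDiffOn h2).congr ?_
  intro φ hφ
  have := S.d_mem k _ hφ
  exact (evX_eq hr φ ⟨by linarith [this.2], by linarith [this.1]⟩).symm

lemma LW_open : IsOpen (S.Lof ⁻¹' S.W) := S.Wopen.preimage (Lof_contDiff S).continuous

lemma U_open (hr : 0 < r) : IsOpen S.U :=
  (hat_contDiffOn S hr).continuousOn.isOpen_inter_preimage (LW_open S) S.Vopen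

lemma fmap_contDiffOn (hr : 0 < r) : ContDiffOn ℝ 1 S.fmap S.U :=
  S.g_smooth.comp ((hat_contDiffOn S hr).mono fun _ h => h.1) (fun _ h => h.2)

lemma UupJ_open (hr : 0 < r) (J : Finset (Fin kk)) : IsOpen (S.UupJ J) :=
  (U_open S hr).inter ((WupJ_open S J).preimage (Lof_contDiff S).continuous)

/-- the map `(χ, x) ↦ χ + Y(Lχ) x` -/
def Mmap (y : Fin n → F → C1 r ℝ) (q : C1 r (Fin n → ℝ) × (Fin n → ℝ)) : C1 r (Fin n → ℝ) :=
  q.1 + Ymap (fun ν => y ν (S.Lof q.1)) q.2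

lemma YL_contDiffOn (J : Finset (Fin kk)) (y : Fin n → F → C1 r ℝ)
    (hy_smooth : ∀ ν, ContDiffOn ℝ 1 (y ν) (S.WupJ J)) :
    ContDiffOn ℝ 1 (fun q : C1 r (Fin n → ℝ) × (Fin n → ℝ) =>
      Ymap (fun ν => y ν (S.Lof q.1)) q.2) {q | S.Lof q.1 ∈ S.WupJ J} := by
  simp only [Ymap_apply]
  refine ContDiffOn.sum fun ν _ => ?_
  have h0 : ContDiffOn ℝ 1 (fun q : C1 r (Fin n → ℝ) × (Fin n → ℝ) => q.2 ν)
      {q | S.Lof q.1 ∈ S.WupJ J} := ContDiff.contDiffOn (by fun_prop)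
  have h2 : ContDiffOn ℝ 1 (fun q : C1 r (Fin n → ℝ) × (Fin n → ℝ) =>
      singleC1 ν (y ν (S.Lof q.1))) {q | S.Lof q.1 ∈ S.WupJ J} := by
    have h1 : ContDiffOn ℝ 1 (fun q : C1 r (Fin n → ℝ) × (Fin n → ℝ) => y ν (S.Lof q.1))
        {q | S.Lof q.1 ∈ S.WupJ J} :=
      (hy_smooth ν).comp ((Lof_contDiff S).comp contDiff_fst).contDiffOn (fun _ h => h)
    exact (contDiff_C1_map (singleL r ν)).comp_contDiffOn h1
  exact contDiffOn_C1_smul h0 h2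

lemma Mmap_contDiffOn (J : Finset (Fin kk)) (y : Fin n → F → C1 r ℝ)
    (hy_smooth : ∀ ν, ContDiffOn ℝ 1 (y ν) (S.WupJ J)) :
    ContDiffOn ℝ 1 (Mmap S y) {q | S.Lof q.1 ∈ S.WupJ J} :=
  contDiff_fst.contDiffOn.add (YL_contDiffOn S J y hy_smooth)

lemma RJmap_contDiffOn (hr : 0 < r) (J : Finset (Fin kk)) (y : Fin n → F → C1 r ℝ)
    (hy_smooth : ∀ ν, ContDiffOn ℝ 1 (y ν) (S.WupJ J)) :
    ContDiffOn ℝ 1 (S.RJmap y) {φ | S.Lof φ ∈ S.WupJ J} := by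
  have h2 : ContDiffOn ℝ 1 (fun φ : C1 r (Fin n → ℝ) => (φ, dvC φ 0)) {φ | S.Lof φ ∈ S.WupJ J} :=
    (contDiff_id.prodMk (dv0_contDiff hr)).contDiffOn
  have h3 : ContDiffOn ℝ 1 (fun φ : C1 r (Fin n → ℝ) =>
      Ymap (fun ν => y ν (S.Lof φ)) (dvC φ 0)) {φ | S.Lof φ ∈ S.WupJ J} :=
    ContDiffOn.comp (g := fun q : C1 r (Fin n → ℝ) × (Fin n → ℝ) =>
      Ymap (fun ν => y ν (S.Lof q.1)) q.2) (f := fun φ : C1 r (Fin n → ℝ) => (φ, dvC φ 0))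
      (YL_contDiffOn S J y hy_smooth) h2 (fun _ h => h)
  have h4 : ContDiffOn ℝ 1 (fun φ : C1 r (Fin n → ℝ) =>
      φ - Ymap (fun ν => y ν (S.Lof φ)) (dvC φ 0)) {φ | S.Lof φ ∈ S.WupJ J} :=
    contDiffOn_id.sub h3
  exact h4

lemma Lof_Ymap (J : Finset (Fin kk)) (y : Fin n → F → C1 r ℝ)
    (hyL : ∀ ν, ∀ w ∈ S.WupJ J, S.L (singleC1 ν (y ν w)).1.1 = 0) {w : F} (hw : w ∈ S.WupJ J)
    (x : Fin n → ℝ) : S.Lof (Ymap (fun ν => y ν w) x) = 0 := by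
  rw [← LofL_apply, Ymap_apply, map_sum]
  refine Finset.sum_eq_zero fun ν _ => ?_
  rw [map_smul]
  have : LofL S (singleC1 ν (y ν w)) = 0 := hyL ν w hw
  rw [this, smul_zero]

end aux3

theorem main_aux {r : ℝ} {n kk : ℕ} {F : Type*} [NormedAddCommGroup F] [NormedSpace ℝ F]
    (hr : 0 < r) (S : Setting r n kk F)
    (J : Finset (Fin kk))
    (y : Fin n → F → C1 r ℝ)
    (hy_smooth : ∀ ν, ContDiffOn ℝ 1 (y ν) (S.WupJ J))
    (hy0 : ∀ ν, ∀ w ∈ S.WupJ J, evC (y ν w) 0 = 0)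
    (hy1 : ∀ ν, ∀ w ∈ S.WupJ J, dvC (y ν w) 0 = 1)
    (hyL : ∀ ν, ∀ w ∈ S.WupJ J, S.L (singleC1 ν (y ν w)).1.1 = 0)
    (hyvan : ∀ ν, ∀ w ∈ S.WupJ J, ∀ k ∉ J, ∀ t ∈ Set.Icc (-r) (-(S.d k w)),
      evC (y ν w) t = 0) (φ : C1 r (Fin n → ℝ)) (hφ : φ ∈ S.XfJ J) :
      ∃ N O : Set (C1 r (Fin n → ℝ)), IsOpen O ∧ N = S.Xf ∩ O ∧ φ ∈ N ∧
        N ⊆ S.UupJ J ∩ S.Xf ∧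
        (∃ O', IsOpen O' ∧ S.RJmap y '' N = (X0sub r n : Set (C1 r (Fin n → ℝ))) ∩ O') ∧
        IsC1DiffeoOn (S.RJmap y) N (S.RJmap y '' N) := by
  have : CompleteSpace (C1 r (Fin n → ℝ)) := C1_complete hr
  obtain ⟨⟨hφU, hφf⟩, -, hφW, hφJ, hφK⟩ := hφ
  have hφup : S.Lof φ ∈ S.WupJ J := ⟨hφW, hφK⟩
  -- algebraic facts
  have LR : ∀ ψ, S.Lof ψ ∈ S.WupJ J → S.Lof (S.RJmap y ψ) = S.Lof ψ := by
    intro ψ h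
    rw [Setting.RJmap, Lof_sub, Lof_Ymap S J y hyL h, sub_zero]
  have LM : ∀ χ x, S.Lof χ ∈ S.WupJ J → S.Lof (Mmap S y (χ, x)) = S.Lof χ := by
    intro χ x h
    rw [Mmap, Lof_add, Lof_Ymap S J y hyL h, add_zero]
  have dM : ∀ χ x, S.Lof χ ∈ S.WupJ J → dvC (Mmap S y (χ, x)) 0 = dvC χ 0 + x := by
    intro χ x h
    rw [Mmap, dvC_add, dvC_Ymap _ _ _ (fun ν => hy1 ν _ h)]
  have MR : ∀ ψ, S.Lof ψ ∈ S.WupJ J → Mmap S y (S.RJmap y ψ, dvC ψ 0) = ψ := by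
    intro ψ h
    simp only [Mmap]
    rw [LR ψ h, Setting.RJmap, sub_add_cancel]
  have dR : ∀ ψ, S.Lof ψ ∈ S.WupJ J → dvC (S.RJmap y ψ) 0 = 0 := by
    intro ψ h
    have h1 := dM (S.RJmap y ψ) (dvC ψ 0) (by rw [LR ψ h]; exact h)
    rw [MR ψ h] at h1
    exact left_eq_add.mp ((add_comm _ _).trans h1.symm).symm
  have RM : ∀ χ x, S.Lof χ ∈ S.WupJ J → dvC χ 0 = 0 → S.RJmap y (Mmap S y (χ, x)) = χ := by
    intro χ x h h0
    rw [Setting.RJmap, LM χ x h, dM χ x h, h0, zero_add, Mmap, add_sub_cancel_right]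
  -- the implicit equation
  set c0 := S.RJmap y φ with hc0
  set x0 := dvC φ 0 with hx0
  have hLc0 : S.Lof c0 ∈ S.WupJ J := by rw [LR φ hφup]; exact hφup
  have hLeq : S.Lof c0 = S.Lof φ := LR φ hφup
  have hM0 : Mmap S y (c0, x0) = φ := MR φ hφup
  have hD : IsOpen {q : C1 r (Fin n → ℝ) × (Fin n → ℝ) | S.Lof q.1 ∈ S.WupJ J} :=
    (WupJ_open S J).preimage ((Lof_contDiff S).continuous.comp continuous_fst)
  have hMc : ContDiffAt ℝ 1 (Mmap S y) (c0, x0) :=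
    (Mmap_contDiffOn S J y hy_smooth).contDiffAt (hD.mem_nhds hLc0)
  have hfc : ContDiffAt ℝ 1 S.fmap (Mmap S y (c0, x0)) := by
    rw [hM0]; exact (fmap_contDiffOn S hr).contDiffAt ((U_open S hr).mem_nhds hφU)
  have hfM : ContDiffAt ℝ 1 (fun q => S.fmap (Mmap S y q)) (c0, x0) :=
    ContDiffAt.comp (g := S.fmap) (f := Mmap S y) (c0, x0) hfc hMc
  let h : C1 r (Fin n → ℝ) × (Fin n → ℝ) → (Fin n → ℝ) := fun q => q.2 - S.fmap (Mmap S y q)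
  have hh : ContDiffAt ℝ 1 h (c0, x0) := contDiffAt_snd.sub hfM
  have hconst : ∀ x, S.fmap (Mmap S y (c0, x)) = S.g (fun k => evC c0 (-(S.d k (S.Lof φ)))) := by
    intro x
    simp only [Setting.fmap]
    congr 1
    funext k
    simp only [Setting.hat]
    rw [LM c0 x hLc0, hLeq, Mmap, evC_add, evC_Ymap, add_zero]
    intro ν
    simp only [hLeq]
    by_cases hk : k ∈ J
    · rw [hφJ k hk, neg_zero]; exact hy0 ν _ hφup
    · have := S.d_mem k _ hφW
      exact hyvan ν _ hφup k hk _ ⟨by linarith [this.2], le_rfl⟩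
  have hh0 : h (c0, x0) = 0 := by
    change x0 - S.fmap (Mmap S y (c0, x0)) = 0
    rw [hM0, ← hφf, sub_self]
  obtain ⟨ψ, hψ0, ⟨B, hBo, hB0, hBc⟩, hψiff⟩ := implicit_abs h c0 x0 _ hh
    (fun x => by simp only [h, hconst]; rfl) hh0
  obtain ⟨A, hAsub, hAo, hA0⟩ := eventually_nhds_iff.1 hψiff
  have hRc := RJmap_contDiffOn S hr J y hy_smooth
  -- the neighbourhoods
  let O : Set (C1 r (Fin n → ℝ)) := S.UupJ J ∩
    (fun χ => (S.RJmap y χ, (S.RJmap y χ, dvC χ 0))) ⁻¹' (B ×ˢ A)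
  have hO : IsOpen O := by
    refine ContinuousOn.isOpen_inter_preimage ?_ (UupJ_open S hr J) (hBo.prod hAo)
    have h1 : ContinuousOn (S.RJmap y) (S.UupJ J) := hRc.continuousOn.mono fun _ h => h.2
    exact h1.prodMk (h1.prodMk (dv0_contDiff hr).continuous.continuousOn)
  let G : C1 r (Fin n → ℝ) → C1 r (Fin n → ℝ) := fun χ => Mmap S y (χ, ψ χ)
  let B' : Set (C1 r (Fin n → ℝ)) := B ∩ S.Lof ⁻¹' (S.WupJ J)
  have hB'o : IsOpen B' := hBo.inter ((WupJ_open S J).preimage (Lof_contDiff S).continuous)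
  have hGc : ContDiffOn ℝ 1 G B' :=
    (Mmap_contDiffOn S J y hy_smooth).comp
      (contDiffOn_id.prodMk (hBc.mono inter_subset_left)) (fun _ h => h.2)
  let O' : Set (C1 r (Fin n → ℝ)) := B' ∩ (fun χ => ((χ, ψ χ), G χ)) ⁻¹' (A ×ˢ S.U)
  have hO' : IsOpen O' := by
    refine ContinuousOn.isOpen_inter_preimage ?_ hB'o (hAo.prod (U_open S hr))
    exact (continuousOn_id.prodMk (hBc.continuousOn.mono inter_subset_left)).prodMk
      hGc.continuousOn
  have fwd : ∀ χ ∈ S.Xf ∩ O, S.RJmap y χ ∈ (X0sub r n : Set (C1 r (Fin n → ℝ))) ∩ O' ∧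
      G (S.RJmap y χ) = χ := by
    rintro χ ⟨⟨hχU, hχf⟩, ⟨-, hχW⟩, hχB, hχA⟩
    have hz : h (S.RJmap y χ, dvC χ 0) = 0 := by
      change dvC χ 0 - S.fmap (Mmap S y (S.RJmap y χ, dvC χ 0)) = 0
      rw [MR χ hχW, ← hχf, sub_self]
    have hψ : ψ (S.RJmap y χ) = dvC χ 0 := (hAsub _ hχA).1 hz
    have hG : G (S.RJmap y χ) = χ := by
      simp only [G, hψ, MR χ hχW]
    refine ⟨⟨dR χ hχW, ⟨hχB, ?_⟩, ?_, ?_⟩, hG⟩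
    · change S.Lof (S.RJmap y χ) ∈ S.WupJ J
      rw [LR χ hχW]; exact hχW
    · change (S.RJmap y χ, ψ (S.RJmap y χ)) ∈ A
      rw [hψ]; exact hχA
    · change G (S.RJmap y χ) ∈ S.U
      rw [hG]; exact hχU
  have bwd : ∀ χ ∈ (X0sub r n : Set (C1 r (Fin n → ℝ))) ∩ O', G χ ∈ S.Xf ∩ O ∧
      S.RJmap y (G χ) = χ := by
    rintro χ ⟨hχ0, ⟨hχB, hχW⟩, hχA, hχU⟩
    have hχ0' : dvC χ 0 = 0 := hχ0
    have hχW' : S.Lof χ ∈ S.WupJ J := hχW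
    have hR : S.RJmap y (G χ) = χ := RM χ _ hχW' hχ0'
    have hd : dvC (G χ) 0 = ψ χ := by
      simp only [G]; rw [dM χ _ hχW', hχ0', zero_add]
    have hz : h (χ, ψ χ) = 0 := (hAsub _ hχA).2 rfl
    refine ⟨⟨⟨hχU, ?_⟩, ⟨hχU, ?_⟩, ?_, ?_⟩, hR⟩
    · rw [hd]; exact sub_eq_zero.1 hz
    · simp only [G]; rw [LM χ _ hχW']; exact hχW'
    · change S.RJmap y (G χ) ∈ B
      rw [hR]; exact hχB
    · change (S.RJmap y (G χ), dvC (G χ) 0) ∈ A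
      rw [hR, hd]; exact hχA
  have himg : S.RJmap y '' (S.Xf ∩ O) = (X0sub r n : Set (C1 r (Fin n → ℝ))) ∩ O' := by
    ext χ
    constructor
    · rintro ⟨η, hη, rfl⟩
      exact (fwd η hη).1
    · intro hχ
      exact ⟨G χ, (bwd χ hχ).1, (bwd χ hχ).2⟩
  refine ⟨S.Xf ∩ O, O, hO, rfl, ⟨⟨hφU, hφf⟩, ⟨hφU, hφup⟩, hB0, hA0⟩, ?_, ⟨O', hO', himg⟩, ?_⟩
  · exact fun χ hχ => ⟨hχ.2.1, hχ.1⟩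
  · refine ⟨hRc.mono fun χ hχ => hχ.2.1.2, ?_, rfl, G, ?_, ?_, ?_⟩
    · intro a ha b hb hab
      rw [← (fwd a ha).2, ← (fwd b hb).2, hab]
    · rw [himg]; exact hGc.mono fun χ hχ => hχ.2.1
    · exact fun χ hχ => (fwd χ hχ).2
    · rw [himg]; exact fun χ hχ => (bwd χ hχ).2

end helpers


variable {r : ℝ} {n kk : ℕ} {F : Type*} [NormedAddCommGroup F] [NormedSpace ℝ F]
  [FiniteDimensional ℝ F]

/-- Corollary 4.5. -/
theorem statement13 (hr : 0 < r) (S : Setting r n kk F)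
    (J : Finset (Fin kk)) (hJ : J ≠ Finset.univ) (hUJ : (S.UJ J).Nonempty)
    (y : Fin n → F → C1 r ℝ)
    (hy_smooth : ∀ ν, ContDiffOn ℝ 1 (y ν) (S.WupJ J))
    (hy0 : ∀ ν, ∀ w ∈ S.WupJ J, evC (y ν w) 0 = 0)
    (hy1 : ∀ ν, ∀ w ∈ S.WupJ J, dvC (y ν w) 0 = 1)
    (hyL : ∀ ν, ∀ w ∈ S.WupJ J, S.L (singleC1 ν (y ν w)).1.1 = 0)
    (hyvan : ∀ ν, ∀ w ∈ S.WupJ J, ∀ k ∉ J, ∀ t ∈ Set.Icc (-r) (-(S.d k w)),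
      evC (y ν w) t = 0) :
    ∀ φ ∈ S.XfJ J,
      ∃ N O : Set (C1 r (Fin n → ℝ)), IsOpen O ∧ N = S.Xf ∩ O ∧ φ ∈ N ∧
        N ⊆ S.UupJ J ∩ S.Xf ∧
        (∃ O', IsOpen O' ∧ S.RJmap y '' N = (X0sub r n : Set (C1 r (Fin n → ℝ))) ∩ O') ∧
        IsC1DiffeoOn (S.RJmap y) N (S.RJmap y '' N) := by
  exact fun φ hφ => main_aux hr S J y hy_smooth hy0 hy1 hyL hyvan φ hφ
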